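/- Let (X,μ) be a measure space, 1 < p,p₁,p₂ < ∞ and 1 ≤ r,r₁,r₂ ≤ ∞ with 1/p = 1/p₁ + 1/p₂ and 1/r = 1/r₁ + 1/r₂. Then for all measurable f,g, ‖fg‖_{L_{p,r}} ≤ C ‖f‖_{L_{p₁,r₁}} ‖g‖_{L_{p₂,r₂}} (Hölder inequality in Lorentz spaces). -/

import Mathlib

open MeasureTheory Set ENNReal

/-- The Lorentz quasinorm `‖f‖_{L_{p,r}}` on a measure space, defined via the
distribution function: `p^{1/r} (∫₀^∞ (s μ{|f|>s}^{1/p})^r ds/s)^{1/r}` for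
`r < ∞`, and `sup_{s>0} s μ{|f|>s}^{1/p}` for `r = ∞`. -/
noncomputable def lorentzNorm {X : Type*} [MeasurableSpace X] (μ : Measure X)
    (p : ℝ) (r : ℝ≥0∞) (f : X → ℝ) : ℝ≥0∞ :=
  if r = ∞ then ⨆ s ∈ Set.Ioi (0:ℝ), ENNReal.ofReal s * μ {x | s < |f x|} ^ (1 / p)
  else ENNReal.ofReal p ^ (1 / r.toReal) *
    (∫⁻ s in Set.Ioi (0:ℝ),
        (ENNReal.ofReal s * μ {x | s < |f x|} ^ (1 / p)) ^ r.toReal / ENNReal.ofReal s) ^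
      (1 / r.toReal)

/-! By the layer cake formula and Tonelli's theorem, the Lorentz quasinorm of `f` is the
`L^r(dt / t)` norm of `t ^ (1 / p) f*(t)`, where `f*` is the decreasing rearrangement. Since
`{|fg| > f*(t) g*(t)} ⊆ {|f| > f*(t)} ∪ {|g| > g*(t)}` has measure at most `2t`, one has
`(fg)*(2t) ≤ f*(t) g*(t)`. As `dt / t` is invariant under `t ↦ 2t`, the ordinary Hölder inequality
for `L^r(dt / t)` gives the claim with constant `2 ^ (1 / p)`. -/

/-- The distribution function `s ↦ μ{|f| > s}` of `f`, with `s` ranging over `[0, ∞]`. -/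
noncomputable def distributionFunction {X ε : Type*} [MeasurableSpace X] [ENorm ε]
    (μ : Measure X) (f : X → ε) (s : ℝ≥0∞) : ℝ≥0∞ :=
  μ {x | s < ‖f x‖ₑ}

/-- The decreasing rearrangement `f*` of `f`, as the generalized inverse of the distribution
function. It takes the value `∞` at `t` when `μ{|f| > s} > t` for every finite `s`. -/
noncomputable def decreasingRearrangement {X ε : Type*} [MeasurableSpace X] [ENorm ε]
    (μ : Measure X) (f : X → ε) (t : ℝ≥0∞) : ℝ≥0∞ :=
  sInf {s | distributionFunction μ f s ≤ t}

/-- The Haar measure `dt / t` of the multiplicative group `(0, ∞)`, as a measure on `ℝ`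
carried by `(0, ∞)`. -/
noncomputable def haarIoi : Measure ℝ :=
  (volume.restrict (Ioi 0)).withDensity fun t ↦ (ENNReal.ofReal t)⁻¹

/-- The function `t ↦ t ^ (1 / p) f*(t)`, whose `L^r(dt / t)` norm is the Lorentz quasinorm
of `f`; it is meant for `0 < t`. -/
noncomputable def weightedRearrangement {X ε : Type*} [MeasurableSpace X] [ENorm ε]
    (μ : Measure X) (p : ℝ) (f : X → ε) (t : ℝ) : ℝ≥0∞ :=
  ENNReal.ofReal t ^ (1 / p) * decreasingRearrangement μ f (ENNReal.ofReal t)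

section Rearrangement

variable {X ε : Type*} [MeasurableSpace X] [ENorm ε] {μ : Measure X} {f : X → ε} {s t : ℝ≥0∞}

lemma antitone_distributionFunction (μ : Measure X) (f : X → ε) :
    Antitone (distributionFunction μ f) :=
  fun _ _ h ↦ measure_mono fun _ hx ↦ h.trans_lt hx

lemma distributionFunction_decreasingRearrangement_le (μ : Measure X) (f : X → ε) (t : ℝ≥0∞) :
    distributionFunction μ f (decreasingRearrangement μ f t) ≤ t := by
  have hne : {s | distributionFunction μ f s ≤ t}.Nonempty :=
    ⟨∞, by simp [distributionFunction]⟩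
  obtain ⟨u, hanti, hlim, hu⟩ := exists_seq_tendsto_sInf hne (OrderBot.bddBelow _)
  have hunion : {x | decreasingRearrangement μ f t < ‖f x‖ₑ} ⊆ ⋃ n, {x | u n < ‖f x‖ₑ} :=
    fun x hx ↦ mem_iUnion.2 (hlim.eventually_lt_const hx).exists
  have hmono : Monotone fun n ↦ {x | u n < ‖f x‖ₑ} :=
    fun _ _ hmn _ hx ↦ (hanti hmn).trans_lt hx
  calc distributionFunction μ f (decreasingRearrangement μ f t)
      ≤ μ (⋃ n, {x | u n < ‖f x‖ₑ}) := measure_mono hunion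
    _ = ⨆ n, μ {x | u n < ‖f x‖ₑ} := hmono.measure_iUnion
    _ ≤ t := iSup_le hu

lemma decreasingRearrangement_le_iff :
    decreasingRearrangement μ f t ≤ s ↔ distributionFunction μ f s ≤ t :=
  ⟨fun h ↦ (antitone_distributionFunction μ f h).trans
    (distributionFunction_decreasingRearrangement_le μ f t), fun h ↦ sInf_le h⟩

lemma lt_decreasingRearrangement_iff :
    s < decreasingRearrangement μ f t ↔ t < distributionFunction μ f s := by
  simpa only [not_le] using decreasingRearrangement_le_iff.not

lemma antitone_decreasingRearrangement (μ : Measure X) (f : X → ε) :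
    Antitone (decreasingRearrangement μ f) :=
  fun _ _ h ↦ sInf_le_sInf fun _ hs ↦ le_trans hs h

lemma measurable_weightedRearrangement (μ : Measure X) (p : ℝ) (f : X → ε) :
    Measurable (weightedRearrangement μ p f) :=
  (ENNReal.measurable_ofReal.pow_const _).mul
    ((antitone_decreasingRearrangement μ f).measurable.comp ENNReal.measurable_ofReal)

lemma decreasingRearrangement_mul_le {A : Type*} [NonUnitalSeminormedRing A] (f g : X → A)
    (s t : ℝ≥0∞) :
    decreasingRearrangement μ (f * g) (s + t) ≤
      decreasingRearrangement μ f s * decreasingRearrangement μ g t := by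
  set a := decreasingRearrangement μ f s
  set b := decreasingRearrangement μ g t
  have hsub : {x | a * b < ‖(f * g) x‖ₑ} ⊆ {x | a < ‖f x‖ₑ} ∪ {x | b < ‖g x‖ₑ} := by
    intro x hx
    by_contra! hle
    simp only [mem_union, mem_ofPred_eq, not_or, not_lt] at hle
    have hmul : ‖f x * g x‖ₑ ≤ ‖f x‖ₑ * ‖g x‖ₑ := by
      simp only [enorm_eq_nnnorm]
      exact_mod_cast nnnorm_mul_le (f x) (g x)
    exact hx.not_ge (hmul.trans (mul_le_mul' hle.1 hle.2))
  refine decreasingRearrangement_le_iff.2 ?_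
  calc distributionFunction μ (f * g) (a * b)
      ≤ distributionFunction μ f a + distributionFunction μ g b :=
        (measure_mono hsub).trans (measure_union_le _ _)
    _ ≤ s + t := add_le_add (distributionFunction_decreasingRearrangement_le μ f s)
        (distributionFunction_decreasingRearrangement_le μ g t)

lemma weightedRearrangement_mul_le {A : Type*} [NonUnitalSeminormedRing A] {p p₁ p₂ : ℝ}
    (hp₁ : 0 < p₁) (hp₂ : 0 < p₂) (hp : 1 / p = 1 / p₁ + 1 / p₂) (f g : X → A) (t : ℝ) :
    weightedRearrangement μ p (f * g) (2 * t) ≤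
      2 ^ (1 / p) * (weightedRearrangement μ p₁ f t * weightedRearrangement μ p₂ g t) := by
  have hp0 : 0 ≤ 1 / p := hp ▸ by positivity
  have hdouble : ENNReal.ofReal (2 * t) = 2 * ENNReal.ofReal t := by
    rw [ENNReal.ofReal_mul zero_le_two, ENNReal.ofReal_ofNat]
  have hsplit : ENNReal.ofReal t ^ (1 / p) =
      ENNReal.ofReal t ^ (1 / p₁) * ENNReal.ofReal t ^ (1 / p₂) := by
    rw [hp, ENNReal.rpow_add_of_nonneg _ _ (by positivity) (by positivity)]
  simp only [weightedRearrangement]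
  calc ENNReal.ofReal (2 * t) ^ (1 / p) *
        decreasingRearrangement μ (f * g) (ENNReal.ofReal (2 * t))
      ≤ ENNReal.ofReal (2 * t) ^ (1 / p) * (decreasingRearrangement μ f (ENNReal.ofReal t) *
          decreasingRearrangement μ g (ENNReal.ofReal t)) := by
        gcongr
        rw [hdouble, two_mul]
        exact decreasingRearrangement_mul_le f g _ _
    _ = _ := by
        rw [hdouble, ENNReal.mul_rpow_of_nonneg _ _ hp0, hsplit]
        ring

end Rearrangement

section HaarIoi

instance : SFinite haarIoi := inferInstanceAs (SFinite (Measure.withDensity _ _))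

lemma lintegral_haarIoi (φ : ℝ → ℝ≥0∞) :
    ∫⁻ t, φ t ∂haarIoi = ∫⁻ t in Ioi 0, φ t / ENNReal.ofReal t := by
  rw [haarIoi, lintegral_withDensity_eq_lintegral_mul_non_measurable _ (by fun_prop)]
  · simp only [Pi.mul_apply, div_eq_mul_inv, mul_comm]
  · filter_upwards [ae_restrict_mem measurableSet_Ioi] with t ht
    simpa using ht

lemma exists_mem_Ioo_of_ae_haarIoi {P : ℝ → Prop} (hP : ∀ᵐ t ∂haarIoi, P t) {a b : ℝ}
    (ha : 0 ≤ a) (hab : a < b) : ∃ t ∈ Ioo a b, P t := by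
  have hac : volume.restrict (Ioi 0) ≪ haarIoi :=
    withDensity_absolutelyContinuous' (by fun_prop) (by simp)
  have hae : ∀ᵐ t ∂volume.restrict (Ioo a b), P t :=
    ae_restrict_of_ae_restrict_of_subset (fun t ht ↦ ha.trans_lt ht.1) (hac.ae_le hP)
  have : NeZero (volume.restrict (Ioo a b)) := ⟨by simpa using hab⟩
  exact ((ae_restrict_mem measurableSet_Ioo).and hae).exists

lemma map_const_mul_haarIoi {c : ℝ} (hc : 0 < c) : haarIoi.map (c * ·) = haarIoi := by
  have hemb := measurableEmbedding_mulLeft₀ hc.ne'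
  refine Measure.ext_of_lintegral _ fun φ _ ↦ ?_
  set ψ : ℝ → ℝ≥0∞ := (Ioi 0).indicator fun t ↦ φ t / ENNReal.ofReal t
  have hψ (t : ℝ) :
      (Ioi 0).indicator (fun t ↦ φ (c * t) / ENNReal.ofReal t) t =
        ENNReal.ofReal c * ψ (c * t) := by
    by_cases ht : 0 < t
    · have hct : 0 < c * t := mul_pos hc ht
      simp only [ψ, indicator, mem_Ioi, ht, hct, if_true]
      rw [ENNReal.ofReal_mul hc.le, ← mul_div_assoc,
        ENNReal.mul_div_mul_left _ _ (by simpa using hc) ENNReal.ofReal_ne_top]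
    · simp [ψ, indicator, ht, hc]
  calc ∫⁻ t, φ t ∂haarIoi.map (c * ·)
      = ∫⁻ t, ENNReal.ofReal c * ψ (c * t) := by
        rw [hemb.lintegral_map, lintegral_haarIoi, ← lintegral_indicator measurableSet_Ioi]
        exact lintegral_congr hψ
    _ = ∫⁻ t, ψ t ∂(ENNReal.ofReal |c| • volume.map (c * ·)) := by
        rw [lintegral_const_mul' _ _ ENNReal.ofReal_ne_top, lintegral_smul_measure,
          hemb.lintegral_map, abs_of_pos hc, smul_eq_mul]
    _ = ∫⁻ t, φ t ∂haarIoi := by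
        rw [Real.smul_map_volume_mul_left hc.ne', lintegral_haarIoi,
          lintegral_indicator measurableSet_Ioi]

lemma eLpNorm_comp_const_mul_haarIoi {ε : Type*} [TopologicalSpace ε] [ContinuousENorm ε]
    {c : ℝ} (hc : 0 < c) (u : ℝ → ε) (r : ℝ≥0∞) :
    eLpNorm (fun t ↦ u (c * t)) r haarIoi = eLpNorm u r haarIoi := by
  conv_rhs => rw [← map_const_mul_haarIoi hc,
    (measurableEmbedding_mulLeft₀ hc.ne').eLpNorm_map_measure]
  rfl

end HaarIoi

section LayerCake

lemma ofReal_rpow_div_ofReal {b s : ℝ} (hs : 0 < s) :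
    ENNReal.ofReal s ^ b / ENNReal.ofReal s = ENNReal.ofReal (s ^ (b - 1)) := by
  rw [Real.rpow_sub_one hs.ne', ENNReal.ofReal_div_of_pos hs, ENNReal.ofReal_rpow_of_pos hs]

lemma lintegral_Ioi_rpow (a : ℝ) : ∫⁻ s in Ioi (0 : ℝ), ENNReal.ofReal (s ^ a) = ∞ := by
  by_contra h
  refine not_integrableOn_Ioi_rpow a ((lintegral_ofReal_ne_top_iff_integrable ?_ ?_).1 h)
  · exact (measurable_id.pow_const a).aestronglyMeasurable
  · filter_upwards [ae_restrict_mem measurableSet_Ioi] with s hs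
    exact Real.rpow_nonneg hs.le a

lemma lintegral_Ioo_rpow_sub_one {b c : ℝ} (hb : 0 < b) (hc : 0 ≤ c) :
    ∫⁻ s in Ioo 0 c, ENNReal.ofReal (s ^ (b - 1)) = ENNReal.ofReal (c ^ b / b) := by
  have hint : IntervalIntegrable (fun s : ℝ ↦ s ^ (b - 1)) volume 0 c :=
    intervalIntegral.intervalIntegrable_rpow' (by linarith)
  rw [restrict_Ioo_eq_restrict_Ioc, ← ofReal_integral_eq_lintegral_ofReal,
    ← intervalIntegral.integral_of_le hc, integral_rpow (Or.inl (by linarith)), sub_add_cancel,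
    Real.zero_rpow hb.ne', sub_zero]
  · exact (intervalIntegrable_iff_integrableOn_Ioc_of_le hc).1 hint
  · filter_upwards [ae_restrict_mem measurableSet_Ioc] with s hs
    exact Real.rpow_nonneg hs.1.le _

lemma ofReal_mul_lintegral_indicator_rpow_haarIoi {b : ℝ} (hb : 0 < b) (y : ℝ≥0∞) :
    ENNReal.ofReal b *
      ∫⁻ s, {s | ENNReal.ofReal s < y}.indicator (ENNReal.ofReal · ^ b) s ∂haarIoi = y ^ b := by
  have hmeas : MeasurableSet {s : ℝ | ENNReal.ofReal s < y} :=
    measurableSet_lt ENNReal.measurable_ofReal measurable_const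
  have hlebesgue :
      ∫⁻ s, {s | ENNReal.ofReal s < y}.indicator (ENNReal.ofReal · ^ b) s ∂haarIoi =
        ∫⁻ s in {s | ENNReal.ofReal s < y} ∩ Ioi 0, ENNReal.ofReal (s ^ (b - 1)) := by
    rw [lintegral_haarIoi, ← Measure.restrict_restrict hmeas, ← lintegral_indicator hmeas]
    refine setLIntegral_congr_fun measurableSet_Ioi fun s hs ↦ ?_
    simp only [indicator]
    split_ifs
    · exact ofReal_rpow_div_ofReal hs
    · exact ENNReal.zero_div
  rw [hlebesgue]
  rcases eq_or_ne y ∞ with rfl | hy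
  · simp [lintegral_Ioi_rpow, hb]
  · have hIoo : {s | ENNReal.ofReal s < y} ∩ Ioi 0 = Ioo 0 y.toReal := by
      ext s
      rw [mem_inter_iff, and_comm]
      exact and_congr_right fun hs : 0 < s ↦ ENNReal.ofReal_lt_iff_lt_toReal hs.le hy
    rw [hIoo, lintegral_Ioo_rpow_sub_one hb ENNReal.toReal_nonneg, ← ENNReal.ofReal_mul hb.le,
      mul_div_cancel₀ _ hb.ne', ← ENNReal.ofReal_rpow_of_nonneg ENNReal.toReal_nonneg hb.le,
      ENNReal.ofReal_toReal hy]

lemma lintegral_mul_rpow_eq_lintegral_lintegral {α : Type*} [MeasurableSpace α] (m : Measure α)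
    (φ F : α → ℝ≥0∞) {b : ℝ} (hb : 0 < b) :
    ∫⁻ t, φ t * F t ^ b ∂m = ENNReal.ofReal b * ∫⁻ t, ∫⁻ s,
      {s | ENNReal.ofReal s < F t}.indicator (φ t * ENNReal.ofReal · ^ b) s ∂haarIoi ∂m := by
  rw [← lintegral_const_mul' _ _ ENNReal.ofReal_ne_top]
  refine lintegral_congr fun t ↦ ?_
  have hmeas : Measurable ({s | ENNReal.ofReal s < F t}.indicator (ENNReal.ofReal · ^ b)) :=
    (ENNReal.measurable_ofReal.pow_const b).indicator
      (measurableSet_lt ENNReal.measurable_ofReal measurable_const)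
  rw [← ofReal_mul_lintegral_indicator_rpow_haarIoi hb (F t), mul_left_comm,
    ← lintegral_const_mul _ hmeas]
  simp only [indicator_apply, mul_ite, mul_zero]

-- By Tonelli, both sides are `a b ∬ t ^ a s ^ b (dt / t) (ds / s)` over `{s < F t} = {t < G s}`.
lemma ofReal_mul_lintegral_rpow_mul_rpow_comm {F G : ℝ≥0∞ → ℝ≥0∞}
    (hFG : ∀ s t, s < F t ↔ t < G s) {a b : ℝ} (ha : 0 < a) (hb : 0 < b) :
    ENNReal.ofReal a * ∫⁻ t, ENNReal.ofReal t ^ a * F (ENNReal.ofReal t) ^ b ∂haarIoi =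
      ENNReal.ofReal b * ∫⁻ s, ENNReal.ofReal s ^ b * G (ENNReal.ofReal s) ^ a ∂haarIoi := by
  have hF : Antitone F := fun t t' h ↦ le_of_forall_lt fun s hs ↦
    (hFG s t).2 (h.trans_lt ((hFG s t').1 hs))
  set K : ℝ → ℝ → ℝ≥0∞ := fun t s ↦
    {z : ℝ × ℝ | ENNReal.ofReal z.2 < F (ENNReal.ofReal z.1)}.indicator
      (fun z ↦ ENNReal.ofReal z.1 ^ a * ENNReal.ofReal z.2 ^ b) (t, s)
  have hK : Measurable (Function.uncurry K) := by
    refine Measurable.indicator (by fun_prop) (measurableSet_lt (by fun_prop) ?_)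
    exact hF.measurable.comp (ENNReal.measurable_ofReal.comp measurable_fst)
  have hKG (s t : ℝ) : K t s = {t | ENNReal.ofReal t < G (ENNReal.ofReal s)}.indicator
      (ENNReal.ofReal s ^ b * ENNReal.ofReal · ^ a) t := by
    simp only [K, indicator_apply, mem_ofPred_eq, hFG, mul_comm]
  calc ENNReal.ofReal a * ∫⁻ t, ENNReal.ofReal t ^ a * F (ENNReal.ofReal t) ^ b ∂haarIoi
      = ENNReal.ofReal a * (ENNReal.ofReal b * ∫⁻ t, ∫⁻ s, K t s ∂haarIoi ∂haarIoi) := by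
        rw [lintegral_mul_rpow_eq_lintegral_lintegral _ _ _ hb]
        rfl
    _ = ENNReal.ofReal b * (ENNReal.ofReal a * ∫⁻ s, ∫⁻ t, K t s ∂haarIoi ∂haarIoi) := by
        rw [mul_left_comm, lintegral_lintegral_swap hK.aemeasurable]
    _ = ENNReal.ofReal b * ∫⁻ s, ENNReal.ofReal s ^ b * G (ENNReal.ofReal s) ^ a ∂haarIoi := by
        simp only [lintegral_mul_rpow_eq_lintegral_lintegral _ _ _ ha, hKG]

end LayerCake

section LorentzNorm

variable {X : Type*} [MeasurableSpace X] {μ : Measure X} {f : X → ℝ} {p : ℝ} {r : ℝ≥0∞}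

lemma measure_lt_abs_eq_distributionFunction {s : ℝ} (hs : 0 ≤ s) :
    μ {x | s < |f x|} = distributionFunction μ f (ENNReal.ofReal s) := by
  simp only [distributionFunction, Real.enorm_eq_ofReal_abs,
    ENNReal.ofReal_lt_ofReal_iff_of_nonneg hs]

lemma lorentzNorm_top_eq_iSup :
    lorentzNorm μ p ∞ f = ⨆ s ∈ Ioi (0 : ℝ),
      ENNReal.ofReal s * distributionFunction μ f (ENNReal.ofReal s) ^ (1 / p) := by
  rw [lorentzNorm, if_pos rfl]
  exact biSup_congr fun s hs ↦ by rw [measure_lt_abs_eq_distributionFunction (le_of_lt hs)]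

lemma lorentzNorm_eq_lintegral_distributionFunction (hr : r ≠ ∞) :
    lorentzNorm μ p r f = ENNReal.ofReal p ^ (1 / r.toReal) *
      (∫⁻ s, (ENNReal.ofReal s *
        distributionFunction μ f (ENNReal.ofReal s) ^ (1 / p)) ^ r.toReal ∂haarIoi) ^
          (1 / r.toReal) := by
  rw [lorentzNorm, if_neg hr, lintegral_haarIoi]
  congr 2
  refine setLIntegral_congr_fun measurableSet_Ioi fun s hs ↦ ?_
  rw [measure_lt_abs_eq_distributionFunction (le_of_lt hs)]

lemma lintegral_weightedRearrangement_rpow {ε : Type*} [ENorm ε] (f : X → ε) (hp : 0 < p)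
    {q : ℝ} (hq : 0 < q) :
    ∫⁻ t, weightedRearrangement μ p f t ^ q ∂haarIoi = ENNReal.ofReal p *
      ∫⁻ s, (ENNReal.ofReal s *
        distributionFunction μ f (ENNReal.ofReal s) ^ (1 / p)) ^ q ∂haarIoi := by
  have hswap := ofReal_mul_lintegral_rpow_mul_rpow_comm
    (fun s t ↦ lt_decreasingRearrangement_iff (μ := μ) (f := f) (s := s) (t := t))
    (div_pos hq hp) hq
  simp only [weightedRearrangement, ENNReal.mul_rpow_of_nonneg _ _ hq.le, ← ENNReal.rpow_mul,
    one_div_mul_eq_div]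
  have hq_eq : ENNReal.ofReal q = ENNReal.ofReal (q / p) * ENNReal.ofReal p := by
    rw [← ENNReal.ofReal_mul (by positivity), div_mul_cancel₀ _ hp.ne']
  rw [hq_eq, mul_assoc] at hswap
  exact (ENNReal.mul_right_inj (by simpa using div_pos hq hp) ENNReal.ofReal_ne_top).1 hswap

lemma eLpNorm_top_weightedRearrangement_le (f : X → ℝ) (hp : 0 < p) :
    eLpNorm (weightedRearrangement μ p f) ∞ haarIoi ≤ lorentzNorm μ p ∞ f := by
  rw [eLpNorm_exponent_top, lorentzNorm_top_eq_iSup]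
  refine eLpNormEssSup_le_of_ae_enorm_bound (.of_forall fun t ↦ ?_)
  rw [enorm_eq_self, weightedRearrangement, mul_comm]
  refine ENNReal.mul_le_of_forall_lt fun s hs w hw ↦ ?_
  lift s to NNReal using hs.ne_top
  rcases eq_or_ne s 0 with rfl | hs0
  · simp
  refine le_trans ?_ (le_iSup₂_of_le (s : ℝ) (NNReal.coe_pos.2 (pos_iff_ne_zero.2 hs0)) le_rfl)
  rw [ENNReal.ofReal_coe_nnreal]
  gcongr
  refine hw.le.trans ?_
  gcongr
  exact (lt_decreasingRearrangement_iff.1 hs).le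

lemma lorentzNorm_top_le_eLpNorm_weightedRearrangement (f : X → ℝ) (hp : 0 < p) :
    lorentzNorm μ p ∞ f ≤ eLpNorm (weightedRearrangement μ p f) ∞ haarIoi := by
  rw [eLpNorm_exponent_top, lorentzNorm_top_eq_iSup]
  refine iSup₂_le fun s _ ↦ ENNReal.mul_le_of_forall_lt fun s' hs' w hw ↦ ?_
  rw [one_div, ENNReal.lt_rpow_inv_iff hp] at hw
  obtain ⟨a, ha, hwa, had⟩ := ENNReal.lt_iff_exists_real_btwn.1 hw
  obtain ⟨b, -, hab, hbd⟩ := ENNReal.lt_iff_exists_real_btwn.1 had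
  -- The essential supremum controls only almost every `t`: pick one just below `μ{|f| > s}`.
  obtain ⟨t, ⟨hat, htb⟩, ht⟩ := exists_mem_Ioo_of_ae_haarIoi
    (ae_le_eLpNormEssSup (f := weightedRearrangement μ p f)) ha
    ((ENNReal.ofReal_lt_ofReal_iff_of_nonneg ha).1 hab)
  refine le_trans ?_ ht
  rw [enorm_eq_self, weightedRearrangement, mul_comm]
  gcongr
  · rw [one_div, ENNReal.le_rpow_inv_iff hp]
    exact hwa.le.trans (ENNReal.ofReal_le_ofReal hat.le)
  · exact hs'.le.trans (lt_decreasingRearrangement_iff.2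
      ((ENNReal.ofReal_le_ofReal htb.le).trans_lt hbd)).le

theorem lorentzNorm_eq_eLpNorm_weightedRearrangement (f : X → ℝ) (hp : 0 < p) (hr : r ≠ 0) :
    lorentzNorm μ p r f = eLpNorm (weightedRearrangement μ p f) r haarIoi := by
  rcases eq_or_ne r ∞ with rfl | hr_top
  · exact (lorentzNorm_top_le_eLpNorm_weightedRearrangement f hp).antisymm
      (eLpNorm_top_weightedRearrangement_le f hp)
  · simp only [eLpNorm_eq_lintegral_rpow_enorm_toReal hr hr_top, enorm_eq_self]
    rw [lintegral_weightedRearrangement_rpow f hp (ENNReal.toReal_pos hr hr_top),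
      ENNReal.mul_rpow_of_nonneg _ _ (by positivity),
      lorentzNorm_eq_lintegral_distributionFunction hr_top]

end LorentzNorm

section Holder

variable {α : Type*} [MeasurableSpace α] {m : Measure α} {u v : α → ℝ≥0∞}

lemma eLpNorm_mul_le_eLpNorm_top_mul_eLpNorm (u : α → ℝ≥0∞) (hv : AEMeasurable v m) (q : ℝ≥0∞) :
    eLpNorm (u * v) q m ≤ eLpNorm u ∞ m * eLpNorm v q m := by
  refine eLpNorm_le_mul_eLpNorm_of_ae_le_mul'' q hv.aestronglyMeasurable ?_
  filter_upwards [ENNReal.ae_le_essSup u] with x hx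
  exact mul_le_mul_left hx _

lemma eLpNorm_mul_le_eLpNorm_mul_eLpNorm (hu : AEMeasurable u m) (hv : AEMeasurable v m)
    (p q r : ℝ≥0∞) [HolderTriple p q r] :
    eLpNorm (u * v) r m ≤ eLpNorm u p m * eLpNorm v q m := by
  rcases eq_or_ne r 0 with rfl | hr
  · simp
  rcases eq_or_ne p ∞ with rfl | hp_top
  · obtain rfl : r = q := HolderTriple.unique ∞ q r q
    exact eLpNorm_mul_le_eLpNorm_top_mul_eLpNorm u hv r
  rcases eq_or_ne q ∞ with rfl | hq_top
  · obtain rfl : r = p := HolderTriple.unique p ∞ r p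
    rw [mul_comm u v, mul_comm (eLpNorm u r m)]
    exact eLpNorm_mul_le_eLpNorm_top_mul_eLpNorm v hu r
  have hp : p ≠ 0 := ne_bot_of_le_ne_bot hr (HolderTriple.le p q r)
  have hq : q ≠ 0 := ne_bot_of_le_ne_bot hr (HolderTriple.le q p r)
  have hreal := HolderTriple.toReal r (ENNReal.toReal_pos hp hp_top) (ENNReal.toReal_pos hq hq_top)
  have hr_top : r ≠ ∞ := (ENNReal.toReal_pos_iff.1 hreal.pos').2.ne
  rw [eLpNorm_eq_lintegral_rpow_enorm_toReal hr hr_top,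
    eLpNorm_eq_lintegral_rpow_enorm_toReal hp hp_top,
    eLpNorm_eq_lintegral_rpow_enorm_toReal hq hq_top]
  simp only [enorm_eq_self]
  exact ENNReal.lintegral_Lp_mul_le_Lq_mul_Lr hreal.pos' hreal.lt hreal.one_div_eq m hu hv

end Holder

theorem lorentz_holder_general {X : Type*} [MeasurableSpace X] (μ : Measure X)
    {p p₁ p₂ : ℝ} {r r₁ r₂ : ℝ≥0∞} (hp₁ : 0 < p₁) (hp₂ : 0 < p₂) (hr₁ : r₁ ≠ 0) (hr₂ : r₂ ≠ 0)
    (hp : 1 / p = 1 / p₁ + 1 / p₂) (hr : r⁻¹ = r₁⁻¹ + r₂⁻¹) (f g : X → ℝ) :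
    lorentzNorm μ p r (f * g) ≤
      2 ^ (1 / p) * lorentzNorm μ p₁ r₁ f * lorentzNorm μ p₂ r₂ g := by
  have hp0 : 0 < p := one_div_pos.1 (hp ▸ by positivity)
  have hr0 : r ≠ 0 := by
    rintro rfl
    simp [hr₁, hr₂, eq_comm] at hr
  have : HolderTriple r₁ r₂ r := ⟨hr.symm⟩
  have hu := measurable_weightedRearrangement μ p₁ f
  have hv := measurable_weightedRearrangement μ p₂ g
  rw [lorentzNorm_eq_eLpNorm_weightedRearrangement _ hp0 hr0,
    lorentzNorm_eq_eLpNorm_weightedRearrangement _ hp₁ hr₁,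
    lorentzNorm_eq_eLpNorm_weightedRearrangement _ hp₂ hr₂, mul_assoc]
  calc eLpNorm (weightedRearrangement μ p (f * g)) r haarIoi
      = eLpNorm (fun t ↦ weightedRearrangement μ p (f * g) (2 * t)) r haarIoi :=
        (eLpNorm_comp_const_mul_haarIoi two_pos _ r).symm
    _ ≤ 2 ^ (1 / p) *
        eLpNorm (weightedRearrangement μ p₁ f * weightedRearrangement μ p₂ g) r haarIoi :=
        eLpNorm_le_mul_eLpNorm_of_ae_le_mul'' r (hu.mul hv).aestronglyMeasurable
          (.of_forall (weightedRearrangement_mul_le hp₁ hp₂ hp f g))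
    _ ≤ 2 ^ (1 / p) * (eLpNorm (weightedRearrangement μ p₁ f) r₁ haarIoi *
        eLpNorm (weightedRearrangement μ p₂ g) r₂ haarIoi) := by
        gcongr
        exact eLpNorm_mul_le_eLpNorm_mul_eLpNorm hu.aemeasurable hv.aemeasurable r₁ r₂ r

/-- **Hölder's inequality in Lorentz spaces:** if `1/p = 1/p₁ + 1/p₂` and
`1/r = 1/r₁ + 1/r₂`, then `‖fg‖_{L_{p,r}} ≤ C ‖f‖_{L_{p₁,r₁}} ‖g‖_{L_{p₂,r₂}}`. -/
theorem lorentz_holder {X : Type*} [MeasurableSpace X] (μ : Measure X)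
    (p p₁ p₂ : ℝ) (r r₁ r₂ : ℝ≥0∞)
    (hp : 1 < p) (hp₁ : 1 < p₁) (hp₂ : 1 < p₂)
    (hr : 1 ≤ r) (hr₁ : 1 ≤ r₁) (hr₂ : 1 ≤ r₂)
    (hpeq : 1 / p = 1 / p₁ + 1 / p₂) (hreq : r⁻¹ = r₁⁻¹ + r₂⁻¹) :
    ∃ C : ℝ≥0∞, C ≠ ∞ ∧
      ∀ f g : X → ℝ, Measurable f → Measurable g →
        lorentzNorm μ p r (f * g) ≤ C * lorentzNorm μ p₁ r₁ f * lorentzNorm μ p₂ r₂ g := by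
  exact ⟨2 ^ (1 / p), by finiteness, fun f g _ _ ↦
    lorentz_holder_general μ (by linarith) (by linarith) (zero_lt_one.trans_le hr₁).ne'
      (zero_lt_one.trans_le hr₂).ne' hpeq hreq f g⟩
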